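/- For general lines L_1,…,L_4 in P^3 (i.e., there exists a nonzero polynomial P in the 32 coordinates of spanning vectors a_1,b_1,…,a_4,b_4 ∈ ℂ^4 such that whenever P does not vanish, each pair a_i,b_i is linearly independent, the subspaces L_i = span{a_i,b_i} pairwise intersect only in 0, and the following holds): the ℂ-vector space of homogeneous polynomials F of degree 10 in ℂ[x_0,x_1,x_2,x_3] with F ∈ I(L_i)^3 for i = 1,…,4 has dimension exactly 56, although the virtual (expected) dimension is binom(13,3) − 4·58 = 286 − 232 = 54; hence 𝓛_{10}(3,3,3,3) is special. -/

import Mathlib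

open MvPolynomial

noncomputable section

abbrev C4 : Type := Fin 4 → ℂ
abbrev R3 : Type := MvPolynomial (Fin 4) ℂ

/-- The homogeneous ideal of the line in `P^3` corresponding to a linear subspace
`L ⊆ ℂ^4`: all polynomials vanishing identically on `L`. -/
def lineIdeal (L : Submodule ℂ C4) : Ideal R3 where
  carrier := {F | ∀ v ∈ L, eval v F = 0}
  add_mem' := by
    intro a b ha hb v hv
    simp [ha v hv, hb v hv]
  zero_mem' := by
    intro v hv
    simp
  smul_mem' := by
    intro c F hF v hv
    simp [smul_eq_mul, hF v hv]

/-- The linear system `𝓛_d(m_1, …, m_s)`: homogeneous forms of degree `d`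
vanishing to order `m i` along the line `L i`, as a `ℂ`-subspace. -/
def linSys (d : ℕ) {s : ℕ} (L : Fin s → Submodule ℂ C4) (m : Fin s → ℕ) :
    Submodule ℂ R3 :=
  homogeneousSubmodule (Fin 4) ℂ d ⊓
    ⨅ i, Submodule.restrictScalars ℂ ((lineIdeal (L i)) ^ (m i))

/-- A property `Q` holds for `s` *general* lines in `P^3`: there is a nonzero
polynomial `P` in the `8s` coordinates of spanning vectors such that whenever
`P` does not vanish, each pair of vectors is linearly independent, the spanned
planes are pairwise disjoint, and `Q` holds for these lines. -/
def GeneralLines (s : ℕ) (Q : (Fin s → Submodule ℂ C4) → Prop) : Prop :=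
  ∃ P : MvPolynomial (Fin s × Fin 2 × Fin 4) ℂ, P ≠ 0 ∧
    ∀ v : Fin s → Fin 2 → C4,
      MvPolynomial.eval (fun p => v p.1 p.2.1 p.2.2) P ≠ 0 →
      (∀ i, LinearIndependent ℂ ![v i 0, v i 1]) ∧
      (∀ i j, i ≠ j →
        Submodule.span ℂ {v i 0, v i 1} ⊓ Submodule.span ℂ {v j 0, v j 1} = ⊥) ∧
      Q (fun i => Submodule.span ℂ {v i 0, v i 1})

/-! ### Linear substitutions -/

/-- Linear substitution by a matrix: `F ↦ F ∘ M`. -/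
def lsub (M : Matrix (Fin 4) (Fin 4) ℂ) : R3 →ₐ[ℂ] R3 :=
  aeval fun i => ∑ j, C (M i j) * X j

lemma lsub_X (M : Matrix (Fin 4) (Fin 4) ℂ) (i : Fin 4) :
    lsub M (X i) = ∑ j, C (M i j) * X j := by
  simp [lsub]

lemma eval_lsub (M : Matrix (Fin 4) (Fin 4) ℂ) (v : C4) (F : R3) :
    eval v (lsub M F) = eval (M.mulVec v) F := by
  induction F using MvPolynomial.induction_on with
  | C a => simp [lsub]
  | add p q hp hq => simp [hp, hq]
  | mul_X p i hp =>
    rw [map_mul, map_mul, hp, map_mul, lsub_X]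
    simp [Matrix.mulVec, dotProduct]

lemma lsub_lsub (M N : Matrix (Fin 4) (Fin 4) ℂ) (F : R3) :
    lsub M (lsub N F) = lsub (N * M) F := by
  apply MvPolynomial.funext
  intro v
  simp [eval_lsub, Matrix.mulVec_mulVec]

lemma lsub_one (F : R3) : lsub 1 F = F := by
  apply MvPolynomial.funext
  intro v
  simp [eval_lsub]

/-- Linear substitution by an invertible matrix, as an algebra equivalence. -/
def lsubEquiv (M N : Matrix (Fin 4) (Fin 4) ℂ) (h : M * N = 1) : R3 ≃ₐ[ℂ] R3 :=
  AlgEquiv.ofAlgHom (lsub M) (lsub N)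
    (by
      apply AlgHom.ext
      intro F
      simp [lsub_lsub, mul_eq_one_comm.mp h, lsub_one])
    (by
      apply AlgHom.ext
      intro F
      simp [lsub_lsub, h, lsub_one])

lemma lsubEquiv_apply (M N : Matrix (Fin 4) (Fin 4) ℂ) (h : M * N = 1) (F : R3) :
    lsubEquiv M N h F = lsub M F := rfl

lemma lsubEquiv_symm_apply (M N : Matrix (Fin 4) (Fin 4) ℂ) (h : M * N = 1) (F : R3) :
    (lsubEquiv M N h).symm F = lsub N F := rfl

lemma lsub_isHomogeneous (M : Matrix (Fin 4) (Fin 4) ℂ) {F : R3} {n : ℕ}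
    (hF : F.IsHomogeneous n) : (lsub M F).IsHomogeneous n := by
  have := hF.aeval (fun i => ∑ j, C (M i j) * X j : Fin 4 → R3) (n := 1) (by
    intro i
    apply IsHomogeneous.sum
    intro j _
    simpa using (isHomogeneous_C (Fin 4) (M i j)).mul (isHomogeneous_X ℂ j))
  simpa [lsub] using this

/-! ### The standard line `x₁ = x₃ = 0` -/

/-- The standard line. -/
def stdLine : Submodule ℂ C4 where
  carrier := {v | v 1 = 0 ∧ v 3 = 0}
  add_mem' := by
    rintro a b ⟨h1, h2⟩ ⟨h3, h4⟩
    simp [h1, h2, h3, h4]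
  zero_mem' := by simp
  smul_mem' := by
    rintro c a ⟨h1, h2⟩
    simp [h1, h2]

/-- Polynomials of order at least `m` along the standard line. -/
def ordSub (m : ℕ) : Submodule ℂ R3 where
  carrier := {F | ∀ d : Fin 4 →₀ ℕ, d 1 + d 3 < m → coeff d F = 0}
  add_mem' := by
    intro a b ha hb d hd
    simp [ha d hd, hb d hd]
  zero_mem' := by
    intro d _
    simp
  smul_mem' := by
    intro c F hF d hd
    simp [hF d hd]

/-- The deformation to the normal cone of the standard line. -/
def tau : R3 →ₐ[ℂ] Polynomial R3 :=
  aeval ![Polynomial.C (X 0), Polynomial.X * Polynomial.C (X 1), Polynomial.C (X 2),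
    Polynomial.X * Polynomial.C (X 3)]

lemma monomial_four (d : Fin 4 →₀ ℕ) (c : ℂ) :
    (monomial d c : R3) = C c * (X 0 ^ d 0 * X 1 ^ d 1 * X 2 ^ d 2 * X 3 ^ d 3) := by
  rw [monomial_eq, Finsupp.prod_fintype _ _ (by simp), Fin.prod_univ_four]

lemma tau_monomial (d : Fin 4 →₀ ℕ) (c : ℂ) :
    tau (monomial d c) = Polynomial.monomial (d 1 + d 3) (monomial d c) := by
  have hC : tau (C c) = Polynomial.C (C c) := by
    simp [tau]
  rw [monomial_four, map_mul, hC]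
  simp only [map_mul, map_pow]
  have h0 : tau (X 0) = Polynomial.C (X 0) := by simp [tau]
  have h1 : tau (X 1) = Polynomial.X * Polynomial.C (X 1) := by simp [tau]
  have h2 : tau (X 2) = Polynomial.C (X 2) := by simp [tau]
  have h3 : tau (X 3) = Polynomial.X * Polynomial.C (X 3) := by simp [tau]
  rw [h0, h1, h2, h3, ← Polynomial.C_mul_X_pow_eq_monomial]
  simp only [map_mul, map_pow]
  ring

lemma coeff_coeff_tau (F : R3) (k : ℕ) (d : Fin 4 →₀ ℕ) :
    coeff d ((tau F).coeff k) = if d 1 + d 3 = k then coeff d F else 0 := by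
  induction F using MvPolynomial.induction_on' with
  | monomial e c =>
    rw [tau_monomial, Polynomial.coeff_monomial]
    by_cases h : e = d
    · subst h
      split_ifs <;> simp
    · split_ifs <;> simp [coeff_monomial, h]
  | add p q hp hq =>
    rw [map_add, Polynomial.coeff_add, coeff_add, hp, hq, coeff_add]
    split_ifs <;> simp

lemma mem_ordSub_iff_dvd (F : R3) (m : ℕ) : F ∈ ordSub m ↔ Polynomial.X ^ m ∣ tau F := by
  rw [Polynomial.X_pow_dvd_iff]
  constructor
  · intro h k hk
    ext d
    rw [coeff_coeff_tau]
    split_ifs with hd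
    · rw [h d (by omega)]; simp
    · simp
  · intro h d hd
    have := coeff_coeff_tau F (d 1 + d 3) d
    rw [h _ hd] at this
    simpa using this.symm

lemma mem_lineIdeal (L : Submodule ℂ C4) (F : R3) :
    F ∈ lineIdeal L ↔ ∀ v ∈ L, eval v F = 0 := Iff.rfl

lemma eval_coeff_zero_tau (F : R3) (v : C4) :
    eval v ((tau F).coeff 0) = eval ![v 0, 0, v 2, 0] F := by
  induction F using MvPolynomial.induction_on' with
  | monomial e c =>
    rw [tau_monomial, Polynomial.coeff_monomial]
    rw [monomial_four]
    split_ifs with h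
    · have h1 : e 1 = 0 := by omega
      have h3 : e 3 = 0 := by omega
      simp [h1, h3]
    · by_cases h1 : e 1 = 0
      · have h3 : e 3 ≠ 0 := by omega
        simp [h3]
      · simp [h1]
  | add p q hp hq =>
    rw [map_add, Polynomial.coeff_add, map_add, map_add, hp, hq]

lemma mem_ordSub_one_iff (F : R3) : F ∈ ordSub 1 ↔ F ∈ lineIdeal stdLine := by
  rw [mem_ordSub_iff_dvd, pow_one, Polynomial.X_dvd_iff, mem_lineIdeal]
  constructor
  · intro h v hv
    have := eval_coeff_zero_tau F v
    rw [h] at this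
    have hv' : v = ![v 0, 0, v 2, 0] := by
      ext i
      fin_cases i
      · rfl
      · exact hv.1
      · rfl
      · exact hv.2
    rw [hv', ← this]
    simp
  · intro h
    apply MvPolynomial.funext
    intro v
    rw [eval_coeff_zero_tau, h _ (by simp [stdLine])]
    simp

lemma mem_pow_stdLine_iff (F : R3) (m : ℕ) :
    F ∈ lineIdeal stdLine ^ m ↔ F ∈ ordSub m := by
  constructor
  · intro h
    rw [mem_ordSub_iff_dvd]
    have h1 : Ideal.map tau (lineIdeal stdLine) ≤ Ideal.span {Polynomial.X} := by
      rw [Ideal.map_le_iff_le_comap]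
      intro G hG
      rw [Ideal.mem_comap, Ideal.mem_span_singleton]
      simpa using (mem_ordSub_iff_dvd G 1).mp ((mem_ordSub_one_iff G).mpr hG)
    have h2 := Ideal.mem_map_of_mem tau h
    rw [Ideal.map_pow] at h2
    have h3 := Ideal.pow_right_mono h1 m h2
    rwa [Ideal.span_singleton_pow, Ideal.mem_span_singleton] at h3
  · intro h
    rw [← support_sum_monomial_coeff F]
    apply Ideal.sum_mem
    intro d hd
    have hdm : m ≤ d 1 + d 3 := by
      by_contra hlt
      exact (mem_support_iff.mp hd) (h d (by omega))
    have hX1 : (X 1 : R3) ∈ lineIdeal stdLine := by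
      intro v hv
      simpa using hv.1
    have hX3 : (X 3 : R3) ∈ lineIdeal stdLine := by
      intro v hv
      simpa using hv.2
    have h4 : (X 1 : R3) ^ d 1 * X 3 ^ d 3 ∈ lineIdeal stdLine ^ (d 1 + d 3) := by
      rw [pow_add]
      exact Ideal.mul_mem_mul (Ideal.pow_mem_pow hX1 _) (Ideal.pow_mem_pow hX3 _)
    have h5 := Ideal.pow_le_pow_right hdm h4
    rw [monomial_four]
    have : (C (coeff d F) * (X 0 ^ d 0 * X 1 ^ d 1 * X 2 ^ d 2 * X 3 ^ d 3) : R3)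
      = (C (coeff d F) * (X 0 ^ d 0 * X 2 ^ d 2)) * (X 1 ^ d 1 * X 3 ^ d 3) := by ring
    rw [this]
    exact Ideal.mul_mem_left _ _ h5

lemma lsub_mem_pow (M : Matrix (Fin 4) (Fin 4) ℂ) (I J : Ideal R3)
    (h : ∀ F ∈ I, lsub M F ∈ J) (m : ℕ) (F : R3) (hF : F ∈ I ^ m) : lsub M F ∈ J ^ m := by
  have h1 : Ideal.map (lsub M) I ≤ J := by
    rw [Ideal.map_le_iff_le_comap]
    exact h
  have h2 := Ideal.mem_map_of_mem (lsub M) hF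
  rw [Ideal.map_pow] at h2
  exact Ideal.pow_right_mono h1 m h2

lemma mem_pow_line_iff (M N : Matrix (Fin 4) (Fin 4) ℂ) (h : M * N = 1)
    (L : Submodule ℂ C4) (hL : ∀ v, M.mulVec v ∈ L ↔ v ∈ stdLine) (F : R3) (m : ℕ) :
    F ∈ lineIdeal L ^ m ↔ lsub M F ∈ ordSub m := by
  rw [← mem_pow_stdLine_iff]
  constructor
  · apply lsub_mem_pow
    intro G hG v hv
    rw [eval_lsub]
    exact hG _ ((hL v).mpr hv)
  · intro hF
    have h1 := lsub_mem_pow N (lineIdeal stdLine) (lineIdeal L) (by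
      intro G hG v hv
      rw [eval_lsub]
      apply hG
      rw [← hL, Matrix.mulVec_mulVec, h, Matrix.one_mulVec]
      exact hv) m _ hF
    rwa [lsub_lsub, h, lsub_one] at h1

/-! ### Bigraded pieces -/

/-- The exponent vector with given entries. -/
def mk4 (a b c d : ℕ) : Fin 4 →₀ ℕ := Finsupp.equivFunOnFinite.symm ![a, b, c, d]

lemma mk4_0 (a b c d : ℕ) : mk4 a b c d 0 = a := rfl
lemma mk4_1 (a b c d : ℕ) : mk4 a b c d 1 = b := rfl
lemma mk4_2 (a b c d : ℕ) : mk4 a b c d 2 = c := rfl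
lemma mk4_3 (a b c d : ℕ) : mk4 a b c d 3 = d := rfl

lemma eq_mk4 (d : Fin 4 →₀ ℕ) : d = mk4 (d 0) (d 1) (d 2) (d 3) := by
  ext i
  fin_cases i <;> rfl

/-- The weights of the first block of variables. -/
def wx : Fin 4 → ℕ := ![1, 1, 0, 0]

lemma weight_wx (d : Fin 4 →₀ ℕ) : Finsupp.weight wx d = d 0 + d 1 := by
  rw [Finsupp.weight_apply, Finsupp.sum_fintype _ _ (by simp), Fin.sum_univ_four]
  simp [wx]

lemma degree_four (d : Fin 4 →₀ ℕ) : d.degree = d 0 + d 1 + d 2 + d 3 := by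
  rw [Finsupp.degree_eq_sum, Fin.sum_univ_four]

/-- The component of degree `a` in the first block of variables. -/
def xcomp (a : ℕ) : R3 →ₗ[ℂ] R3 := weightedHomogeneousComponent wx a

lemma coeff_xcomp (a : ℕ) (F : R3) (d : Fin 4 →₀ ℕ) :
    coeff d (xcomp a F) = if d 0 + d 1 = a then coeff d F else 0 := by
  unfold xcomp
  rw [coeff_weightedHomogeneousComponent, weight_wx]

/-- A block diagonal matrix. -/
def blk (A B : Matrix (Fin 2) (Fin 2) ℂ) : Matrix (Fin 4) (Fin 4) ℂ :=
  !![A 0 0, A 0 1, 0, 0; A 1 0, A 1 1, 0, 0; 0, 0, B 0 0, B 0 1; 0, 0, B 1 0, B 1 1]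

lemma blk_mul (A B A' B' : Matrix (Fin 2) (Fin 2) ℂ) :
    blk A B * blk A' B' = blk (A * A') (B * B') := by
  ext i j
  fin_cases i <;> fin_cases j <;>
    simp [blk, Matrix.mul_apply, Fin.sum_univ_four, Fin.sum_univ_two]

lemma blk_one : blk 1 1 = 1 := by
  ext i j
  fin_cases i <;> fin_cases j <;> simp [blk]

lemma lsub_C (M : Matrix (Fin 4) (Fin 4) ℂ) (c : ℂ) : lsub M (C c) = C c := by
  simp [lsub]

lemma lsub_blk_monomial (A B : Matrix (Fin 2) (Fin 2) ℂ) (d : Fin 4 →₀ ℕ) (c : ℂ) :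
    IsWeightedHomogeneous wx (lsub (blk A B) (monomial d c)) (d 0 + d 1) := by
  have hX : ∀ i j k, wx j = k → IsWeightedHomogeneous wx (C i * X j : R3) k := by
    intro i j k hk
    subst hk
    exact (isWeightedHomogeneous_X ℂ wx j).C_mul i
  have h0 : IsWeightedHomogeneous wx (lsub (blk A B) (X 0)) 1 := by
    rw [lsub_X, Fin.sum_univ_four]
    simp only [blk, Matrix.of_apply, Matrix.cons_val, map_zero, zero_mul, add_zero]
    exact (hX _ _ _ rfl).add (hX _ _ _ rfl)
  have h1 : IsWeightedHomogeneous wx (lsub (blk A B) (X 1)) 1 := by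
    rw [lsub_X, Fin.sum_univ_four]
    simp only [blk, Matrix.of_apply, Matrix.cons_val, map_zero, zero_mul, add_zero]
    exact (hX _ _ _ rfl).add (hX _ _ _ rfl)
  have h2 : IsWeightedHomogeneous wx (lsub (blk A B) (X 2)) 0 := by
    rw [lsub_X, Fin.sum_univ_four]
    simp only [blk, Matrix.of_apply, Matrix.cons_val, map_zero, zero_mul, zero_add]
    exact (hX _ _ _ rfl).add (hX _ _ _ rfl)
  have h3 : IsWeightedHomogeneous wx (lsub (blk A B) (X 3)) 0 := by
    rw [lsub_X, Fin.sum_univ_four]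
    simp only [blk, Matrix.of_apply, Matrix.cons_val, map_zero, zero_mul, zero_add]
    exact (hX _ _ _ rfl).add (hX _ _ _ rfl)
  rw [monomial_four, map_mul, lsub_C]
  simp only [map_mul, map_pow]
  have := ((((h0.pow (d 0)).mul (h1.pow (d 1))).mul (h2.pow (d 2))).mul (h3.pow (d 3))).C_mul c
  simpa using this

lemma lsub_xcomp (A B : Matrix (Fin 2) (Fin 2) ℂ) (a : ℕ) (F : R3) :
    lsub (blk A B) (xcomp a F) = xcomp a (lsub (blk A B) F) := by
  induction F using MvPolynomial.induction_on' with
  | monomial d c =>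
    have h1 := weightedHomogeneousComponent_of_mem (m := a)
      ((mem_weightedHomogeneousSubmodule _ _ _ _).mpr (lsub_blk_monomial A B d c))
    have h2 : xcomp a (monomial d c : R3) = if a = d 0 + d 1 then monomial d c else 0 :=
      weightedHomogeneousComponent_of_mem (m := a)
        ((mem_weightedHomogeneousSubmodule ℂ wx (d 0 + d 1) (monomial d c)).mpr
          (isWeightedHomogeneous_monomial wx d c (weight_wx d)))
    rw [h2]
    unfold xcomp
    rw [h1]
    split_ifs <;> simp
  | add p q hp hq => simp [hp, hq]

/-- Bihomogeneous forms of bidegree `(a, b)`. -/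
def biSub (a b : ℕ) : Submodule ℂ R3 where
  carrier := {F | ∀ d : Fin 4 →₀ ℕ, coeff d F ≠ 0 → d 0 + d 1 = a ∧ d 2 + d 3 = b}
  add_mem' := by
    intro F G hF hG d hd
    by_cases h : coeff d F = 0
    · apply hG d
      simpa [h] using hd
    · exact hF d h
  zero_mem' := by
    intro d hd
    simp at hd
  smul_mem' := by
    intro c F hF d hd
    apply hF d
    intro h
    simp [h] at hd

lemma mem_biSub (a b : ℕ) (F : R3) :
    F ∈ biSub a b ↔ ∀ d : Fin 4 →₀ ℕ, coeff d F ≠ 0 → d 0 + d 1 = a ∧ d 2 + d 3 = b := Iff.rfl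

lemma isHomogeneous_iff (F : R3) (n : ℕ) :
    F.IsHomogeneous n ↔ ∀ d : Fin 4 →₀ ℕ, coeff d F ≠ 0 → d 0 + d 1 + d 2 + d 3 = n := by
  constructor
  · intro h d hd
    rw [← degree_four, Finsupp.degree_eq_weight_one]
    exact h hd
  · intro h d hd
    have := h d hd
    rw [← degree_four, Finsupp.degree_eq_weight_one] at this
    exact this

lemma mem_biSub_iff (a b : ℕ) (F : R3) :
    F ∈ biSub a b ↔ F.IsHomogeneous (a + b) ∧ xcomp a F = F := by
  rw [mem_biSub, isHomogeneous_iff]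
  constructor
  · intro h
    refine ⟨fun d hd => by have := h d hd; omega, ?_⟩
    ext d
    rw [coeff_xcomp]
    split_ifs with hd
    · rfl
    · by_contra h0
      exact hd (h d (Ne.symm h0)).1
  · rintro ⟨h1, h2⟩ d hd
    have h3 := h1 d hd
    have h4 : d 0 + d 1 = a := by
      by_contra h5
      rw [← h2, coeff_xcomp, if_neg h5] at hd
      exact hd rfl
    exact ⟨h4, by omega⟩

lemma lsub_mem_biSub (A B : Matrix (Fin 2) (Fin 2) ℂ) {a b : ℕ} {F : R3} (hF : F ∈ biSub a b) :
    lsub (blk A B) F ∈ biSub a b := by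
  rw [mem_biSub_iff] at hF ⊢
  exact ⟨lsub_isHomogeneous _ hF.1, by rw [← lsub_xcomp, hF.2]⟩

/-- Bihomogeneous forms with assigned multiplicities along the four lines. -/
def bigr (A B : Fin 4 → Matrix (Fin 2) (Fin 2) ℂ) (a b : ℕ) (m : Fin 4 → ℕ) : Submodule ℂ R3 :=
  biSub a b ⊓ ⨅ i, (ordSub (m i)).comap (lsub (blk (A i) (B i))).toLinearMap

lemma mem_bigr (A B : Fin 4 → Matrix (Fin 2) (Fin 2) ℂ) (a b : ℕ) (m : Fin 4 → ℕ) (F : R3) :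
    F ∈ bigr A B a b m ↔ F ∈ biSub a b ∧ ∀ i, lsub (blk (A i) (B i)) F ∈ ordSub (m i) := by
  simp [bigr, Submodule.mem_iInf]

instance finite_homogeneous (n : ℕ) : Module.Finite ℂ (homogeneousSubmodule (Fin 4) ℂ n) :=
  Module.Finite.iff_fg.mpr (homogeneousSubmodule_fg (σ := Fin 4) (R := ℂ) n)

lemma finite_of_le_homogeneous (n : ℕ) (S : Submodule ℂ R3)
    (h : S ≤ homogeneousSubmodule (Fin 4) ℂ n) : Module.Finite ℂ S :=
  Submodule.finiteDimensional_of_le h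

instance finite_bigr (A B : Fin 4 → Matrix (Fin 2) (Fin 2) ℂ) (a b : ℕ) (m : Fin 4 → ℕ) :
    Module.Finite ℂ (bigr A B a b m) := by
  apply finite_of_le_homogeneous (a + b)
  intro F hF
  rw [mem_bigr, mem_biSub_iff] at hF
  exact hF.1.1

lemma X1_dvd (F : R3) (h : ∀ d : Fin 4 →₀ ℕ, d 1 = 0 → coeff d F = 0) : X 1 ∣ F := by
  rw [X_dvd_iff_modMonomial_eq_zero]
  ext d
  by_cases hd : Finsupp.single 1 1 ≤ d
  · rw [coeff_modMonomial_of_le _ hd]; simp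
  · rw [coeff_modMonomial_of_not_le _ hd, h d]
    · simp
    · by_contra h1
      apply hd
      rw [Finsupp.single_le_iff]
      omega

lemma ordSub_cancel (P Q : R3) (m : ℕ) (v : C4) (hv : eval ![v 0, 0, v 2, 0] P ≠ 0)
    (h : P * Q ∈ ordSub m) : Q ∈ ordSub m := by
  rw [mem_ordSub_iff_dvd] at h ⊢
  rw [map_mul] at h
  apply Polynomial.prime_X.pow_dvd_of_dvd_mul_left m _ h
  rw [Polynomial.X_dvd_iff]
  intro h0
  have := eval_coeff_zero_tau P v
  rw [h0, map_zero] at this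
  exact hv this.symm

/-- The configuration data: frames adapted to the four points in each block. -/
structure Cfg (A A' : Fin 4 → Matrix (Fin 2) (Fin 2) ℂ) : Prop where
  inv : ∀ i, A i * A' i = 1
  sep : ∀ i j, i ≠ j → (A' i * A j) 1 0 ≠ 0

lemma exists_quotient {A A' B B' : Fin 4 → Matrix (Fin 2) (Fin 2) ℂ} (hA : Cfg A A')
    (hB : Cfg B B') (a b : ℕ) (m : Fin 4 → ℕ) (i : Fin 4) (F : R3)
    (hF : F ∈ bigr A B (a + 1) b m)
    (h0 : ∀ d : Fin 4 →₀ ℕ, d 1 = 0 → coeff d (lsub (blk (A i) (B i)) F) = 0) :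
    ∃ G ∈ bigr A B a b (Function.update m i (m i - 1)),
      lsub (blk (A' i) (B' i)) (X 1) * G = F := by
  obtain ⟨H, hH⟩ := X1_dvd _ h0
  rw [mem_bigr] at hF
  have hinv : lsub (blk (A' i) (B' i)) (lsub (blk (A i) (B i)) F) = F := by
    rw [lsub_lsub, blk_mul, hA.inv, hB.inv, blk_one, lsub_one]
  have hG : lsub (blk (A' i) (B' i)) (X 1) * lsub (blk (A' i) (B' i)) H = F := by
    rw [← map_mul, ← hH, hinv]
  have hHc : ∀ d, coeff d H = coeff (Finsupp.single 1 1 + d) (lsub (blk (A i) (B i)) F) := by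
    intro d
    rw [hH, coeff_X_mul]
  have hHbi : H ∈ biSub a b := by
    intro d hd
    rw [hHc] at hd
    have := lsub_mem_biSub (A i) (B i) hF.1 _ hd
    simp at this
    omega
  refine ⟨_, ?_, hG⟩
  rw [mem_bigr]
  refine ⟨lsub_mem_biSub _ _ hHbi, ?_⟩
  intro j
  by_cases hij : j = i
  · subst hij
    rw [lsub_lsub, blk_mul, mul_eq_one_comm.mp (hA.inv j), mul_eq_one_comm.mp (hB.inv j), blk_one,
      lsub_one, Function.update_self]
    intro d hd
    rw [hHc]
    apply hF.2 j
    simp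
    omega
  · rw [Function.update_of_ne hij]
    have h1 := hF.2 j
    rw [← hG, map_mul] at h1
    refine ordSub_cancel _ _ _ ![1, 0, 0, 0] ?_ h1
    rw [lsub_lsub, blk_mul, lsub_X]
    have := hA.sep i j (Ne.symm hij)
    simpa [Fin.sum_univ_four, blk] using this

lemma xstep {A A' B B' : Fin 4 → Matrix (Fin 2) (Fin 2) ℂ} (hA : Cfg A A')
    (hB : Cfg B B') (a b : ℕ) (m : Fin 4 → ℕ) (i : Fin 4) :
    Module.finrank ℂ (bigr A B (a + 1) b m) ≤
      (b + 1 - m i) + Module.finrank ℂ (bigr A B a b (Function.update m i (m i - 1))) := by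
  let f : bigr A B (a + 1) b m →ₗ[ℂ] (Fin (b + 1 - m i) → ℂ) :=
    (LinearMap.pi fun j : Fin (b + 1 - m i) =>
      (lcoeff ℂ (mk4 (a + 1) 0 (b - (j + m i)) (j + m i))).comp
        (lsub (blk (A i) (B i))).toLinearMap).comp (Submodule.subtype _)
  have hf : ∀ F j, f F j = coeff (mk4 (a + 1) 0 (b - (j + m i)) (j + m i))
    (lsub (blk (A i) (B i)) F) := fun F j => rfl
  rw [← LinearMap.finrank_range_add_finrank_ker f]
  have h1 : Module.finrank ℂ (LinearMap.range f) ≤ b + 1 - m i := by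
    have := Submodule.finrank_le (LinearMap.range f)
    simpa using this
  have h2 : (LinearMap.ker f).map (Submodule.subtype _) ≤
      (bigr A B a b (Function.update m i (m i - 1))).map
        (LinearMap.mulLeft ℂ (lsub (blk (A' i) (B' i)) (X 1))) := by
    rintro _ ⟨⟨F, hF⟩, hker, rfl⟩
    obtain ⟨G, hG, hGF⟩ := exists_quotient hA hB a b m i F hF (by
      intro d hd
      by_contra hne
      rw [mem_bigr] at hF
      have hbi := lsub_mem_biSub (A i) (B i) hF.1 d hne
      have hm : m i ≤ d 3 := by
        by_contra hlt
        exact hne (hF.2 i d (by omega))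
      have := congrFun (LinearMap.mem_ker.mp hker) ⟨d 3 - m i, by omega⟩
      rw [hf] at this
      apply hne
      have hd' : mk4 (a + 1) 0 (b - (d 3 - m i + m i)) (d 3 - m i + m i) = d := by
        conv_rhs => rw [eq_mk4 d]
        congr 1 <;> omega
      rw [← hd']
      exact this)
    exact ⟨G, hG, hGF⟩
  have h3 := Submodule.finrank_mono h2
  have h4 := Submodule.finrank_map_le (LinearMap.mulLeft ℂ (lsub (blk (A' i) (B' i)) (X 1)))
    (bigr A B a b (Function.update m i (m i - 1)))
  have h5 := Submodule.finrank_map_subtype_eq _ (LinearMap.ker f)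
  omega

/-! ### Exchanging the two blocks -/

/-- The permutation matrix exchanging the two blocks of variables. -/
def swp : Matrix (Fin 4) (Fin 4) ℂ := !![0, 0, 1, 0; 0, 0, 0, 1; 1, 0, 0, 0; 0, 1, 0, 0]

lemma swp_mul_swp : swp * swp = 1 := by
  ext i j
  fin_cases i <;> fin_cases j <;> simp [swp, Matrix.mul_apply, Fin.sum_univ_four]

lemma blk_mul_swp (A B : Matrix (Fin 2) (Fin 2) ℂ) : blk A B * swp = swp * blk B A := by
  ext i j
  fin_cases i <;> fin_cases j <;> simp [swp, blk, Matrix.mul_apply, Fin.sum_univ_four]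

lemma lsub_swp_monomial (d : Fin 4 →₀ ℕ) (c : ℂ) :
    lsub swp (monomial d c) = monomial (mk4 (d 2) (d 3) (d 0) (d 1)) c := by
  rw [monomial_four, monomial_four, map_mul, lsub_C]
  simp only [map_mul, map_pow, lsub_X, Fin.sum_univ_four, mk4_0, mk4_1, mk4_2, mk4_3]
  simp [swp]
  left
  ring

lemma coeff_lsub_swp (F : R3) (d : Fin 4 →₀ ℕ) :
    coeff d (lsub swp F) = coeff (mk4 (d 2) (d 3) (d 0) (d 1)) F := by
  induction F using MvPolynomial.induction_on' with
  | monomial e c =>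
    rw [lsub_swp_monomial, coeff_monomial, coeff_monomial]
    have : mk4 (e 2) (e 3) (e 0) (e 1) = d ↔ e = mk4 (d 2) (d 3) (d 0) (d 1) := by
      constructor
      · rintro rfl
        exact eq_mk4 e
      · rintro rfl
        exact (eq_mk4 d).symm
    simp only [this]
  | add p q hp hq => simp [hp, hq]

lemma lsub_swp_mem (A B : Fin 4 → Matrix (Fin 2) (Fin 2) ℂ) (a b : ℕ) (m : Fin 4 → ℕ) (F : R3)
    (hF : F ∈ bigr A B a b m) : lsub swp F ∈ bigr B A b a m := by
  rw [mem_bigr] at hF ⊢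
  constructor
  · intro d hd
    rw [coeff_lsub_swp] at hd
    have := hF.1 _ hd
    simp only [mk4_0, mk4_1, mk4_2, mk4_3] at this
    exact this.symm
  · intro i d hd
    rw [lsub_lsub, ← blk_mul_swp, ← lsub_lsub, coeff_lsub_swp]
    apply hF.2 i
    simp only [mk4_1, mk4_3]
    omega

lemma finrank_swp (A B : Fin 4 → Matrix (Fin 2) (Fin 2) ℂ) (a b : ℕ) (m : Fin 4 → ℕ) :
    Module.finrank ℂ (bigr A B a b m) ≤ Module.finrank ℂ (bigr B A b a m) := by
  let f : bigr A B a b m →ₗ[ℂ] bigr B A b a m :=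
    (lsub swp).toLinearMap.restrict (lsub_swp_mem A B a b m)
  apply LinearMap.finrank_le_finrank_of_injective (f := f)
  rintro ⟨F, hF⟩ ⟨G, hG⟩ h
  have h1 : lsub swp F = lsub swp G := congrArg Subtype.val h
  have h2 := congrArg (lsub swp) h1
  rw [lsub_lsub, lsub_lsub, swp_mul_swp, lsub_one, lsub_one] at h2
  exact Subtype.ext h2

lemma ystep {A A' B B' : Fin 4 → Matrix (Fin 2) (Fin 2) ℂ} (hA : Cfg A A')
    (hB : Cfg B B') (a b : ℕ) (m : Fin 4 → ℕ) (i : Fin 4) :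
    Module.finrank ℂ (bigr A B a (b + 1) m) ≤
      (a + 1 - m i) + Module.finrank ℂ (bigr A B a b (Function.update m i (m i - 1))) := by
  have h1 := finrank_swp A B a (b + 1) m
  have h2 := xstep hB hA b a m i
  have h3 := finrank_swp B A b a (Function.update m i (m i - 1))
  omega

/-! ### The normalized configuration -/

/-- Frames at the points `0, ∞, 1, t` of the projective line. -/
def frm (t : ℂ) : Fin 4 → Matrix (Fin 2) (Fin 2) ℂ :=
  ![!![1, 0; 0, 1], !![0, 1; 1, 0], !![1, 0; 1, 1], !![1, 0; t, 1]]

/-- The inverse frames. -/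
def frm' (t : ℂ) : Fin 4 → Matrix (Fin 2) (Fin 2) ℂ :=
  ![!![1, 0; 0, 1], !![0, 1; 1, 0], !![1, 0; -1, 1], !![1, 0; -t, 1]]

lemma frm_cfg (t : ℂ) (h0 : t ≠ 0) (h1 : t ≠ 1) : Cfg (frm t) (frm' t) := by
  have h2 : -1 + t ≠ 0 := fun h => h1 (by linear_combination h)
  have h3 : -t + 1 ≠ 0 := fun h => h1 (by linear_combination -h)
  constructor
  · intro i
    fin_cases i <;> simp [frm, frm', Matrix.one_fin_two]
  · intro i j hij
    fin_cases i <;> fin_cases j <;> simp_all [frm, frm']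

lemma eval_zero_of_ordSub (A B : Matrix (Fin 2) (Fin 2) ℂ) (F : R3) (m : ℕ) (hm : 1 ≤ m)
    (h : lsub (blk A B) F ∈ ordSub m) : eval ![A 0 0, A 1 0, B 0 0, B 1 0] F = 0 := by
  have h1 : lsub (blk A B) F ∈ ordSub 1 := fun d hd => h d (by omega)
  rw [mem_ordSub_one_iff] at h1
  have h2 := h1 ![1, 0, 1, 0] (by simp [stdLine])
  rw [eval_lsub] at h2
  convert h2 using 3
  ext i
  fin_cases i <;> simp [blk, Matrix.mulVec, dotProduct, Fin.sum_univ_four]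

lemma base00 (A B : Fin 4 → Matrix (Fin 2) (Fin 2) ℂ) (m : Fin 4 → ℕ) (hm : 1 ≤ m 3) :
    Module.finrank ℂ (bigr A B 0 0 m) = 0 := by
  have : bigr A B 0 0 m = ⊥ := by
    rw [eq_bot_iff]
    intro F hF
    rw [mem_bigr] at hF
    have h1 := eval_zero_of_ordSub _ _ _ _ hm (hF.2 3)
    have h2 : F = C (coeff 0 F) := by
      ext d
      rw [coeff_C]
      split_ifs with hd
      · rw [hd]
      · by_contra h3
        have := hF.1 d h3
        apply hd
        rw [eq_mk4 d, eq_mk4 0]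
        simp only [Finsupp.coe_zero, Pi.zero_apply]
        congr 1 <;> omega
    rw [h2, eval_C] at h1
    rw [Submodule.mem_bot, h2, h1, map_zero]
  rw [this, finrank_bot]

lemma base11 (s t : ℂ) (hst : s ≠ t) :
    Module.finrank ℂ (bigr (frm s) (frm t) 1 1 ![1, 1, 1, 1]) = 0 := by
  have : bigr (frm s) (frm t) 1 1 ![1, 1, 1, 1] = ⊥ := by
    rw [eq_bot_iff]
    intro F hF
    rw [mem_bigr] at hF
    have h2 : F = monomial (mk4 1 0 1 0) (coeff (mk4 1 0 1 0) F)
        + monomial (mk4 1 0 0 1) (coeff (mk4 1 0 0 1) F)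
        + monomial (mk4 0 1 1 0) (coeff (mk4 0 1 1 0) F)
        + monomial (mk4 0 1 0 1) (coeff (mk4 0 1 0 1) F) := by
      have hne : ∀ a b c d a' b' c' d' : ℕ, mk4 a b c d = mk4 a' b' c' d' ↔
          a = a' ∧ b = b' ∧ c = c' ∧ d = d' := by
        intro a b c d a' b' c' d'
        constructor
        · intro h
          exact ⟨DFunLike.congr_fun h 0, DFunLike.congr_fun h 1, DFunLike.congr_fun h 2,
            DFunLike.congr_fun h 3⟩
        · rintro ⟨rfl, rfl, rfl, rfl⟩
          rfl
      ext d
      simp only [coeff_add, coeff_monomial]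
      by_cases h0 : coeff d F = 0
      · have : ∀ e : Fin 4 →₀ ℕ, (if e = d then coeff e F else 0) = 0 := by
          intro e
          split_ifs with he
          · rw [he, h0]
          · rfl
        simp [this, h0]
      · have h1 := hF.1 d h0
        have h3 : d = mk4 1 0 1 0 ∨ d = mk4 1 0 0 1 ∨ d = mk4 0 1 1 0 ∨ d = mk4 0 1 0 1 := by
          rw [eq_mk4 d]
          simp only [hne]
          omega
        rcases h3 with h3 | h3 | h3 | h3 <;> simp [h3, hne]
    have e : ∀ i, eval ![frm s i 0 0, frm s i 1 0, frm t i 0 0, frm t i 1 0] F = 0 := by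
      intro i
      apply eval_zero_of_ordSub _ _ _ _ _ (hF.2 i)
      fin_cases i <;> simp
    generalize coeff (mk4 1 0 1 0) F = c0 at h2
    generalize coeff (mk4 1 0 0 1) F = c1 at h2
    generalize coeff (mk4 0 1 1 0) F = c2 at h2
    generalize coeff (mk4 0 1 0 1) F = c3 at h2
    subst h2
    simp only [monomial_four, mk4_0, mk4_1, mk4_2, mk4_3] at e
    have e0 := e 0
    have e1 := e 1
    have e2 := e 2
    have e3 := e 3
    simp [frm] at e0 e1 e2 e3
    subst e0 e1
    simp at e2 e3
    have h3 : c1 = 0 := by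
      have : c1 * (t - s) = 0 := by linear_combination e3 - s * e2
      rcases mul_eq_zero.mp this with h | h
      · exact h
      · exact absurd (sub_eq_zero.mp h).symm hst
    subst h3
    simp at e2
    subst e2
    simp
  rw [this, finrank_bot]

/-- The recursive estimates for the dimensions of the bigraded pieces. -/
structure Chain (D : ℕ → ℕ → ℕ → ℕ → ℕ → ℕ → ℕ) : Prop where
  hx0 : ∀ a b p q r s, D (a + 1) b (p + 1) q r s ≤ (b + 1 - (p + 1)) + D a b p q r s
  hx1 : ∀ a b p q r s, D (a + 1) b p (q + 1) r s ≤ (b + 1 - (q + 1)) + D a b p q r s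
  hx2 : ∀ a b p q r s, D (a + 1) b p q (r + 1) s ≤ (b + 1 - (r + 1)) + D a b p q r s
  hx3 : ∀ a b p q r s, D (a + 1) b p q r (s + 1) ≤ (b + 1 - (s + 1)) + D a b p q r s
  hy0 : ∀ a b p q r s, D a (b + 1) (p + 1) q r s ≤ (a + 1 - (p + 1)) + D a b p q r s
  hy1 : ∀ a b p q r s, D a (b + 1) p (q + 1) r s ≤ (a + 1 - (q + 1)) + D a b p q r s
  hy2 : ∀ a b p q r s, D a (b + 1) p q (r + 1) s ≤ (a + 1 - (r + 1)) + D a b p q r s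
  hy3 : ∀ a b p q r s, D a (b + 1) p q r (s + 1) ≤ (a + 1 - (s + 1)) + D a b p q r s
  h11 : D 1 1 1 1 1 1 = 0
  h00 : D 0 0 0 0 1 1 = 0

lemma chain_5_5 {D : ℕ → ℕ → ℕ → ℕ → ℕ → ℕ → ℕ} (h : Chain D) :
    D 5 5 3 3 3 3 ≤ 12 := by
  obtain ⟨hx0, hx1, hx2, hx3, hy0, hy1, hy2, hy3, h11, h00⟩ := h
  have h1 : D 5 5 3 3 3 3 ≤ 3 + D 4 5 2 3 3 3 := hx0 4 5 2 3 3 3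
  have h2 : D 4 5 2 3 3 3 ≤ 3 + D 3 5 2 2 3 3 := hx1 3 5 2 2 3 3
  have h3 : D 3 5 2 2 3 3 ≤ 3 + D 2 5 2 2 2 3 := hx2 2 5 2 2 2 3
  have h4 : D 2 5 2 2 2 3 ≤ 3 + D 1 5 2 2 2 2 := hx3 1 5 2 2 2 2
  have h5 : D 1 5 2 2 2 2 ≤ 0 + D 1 4 1 2 2 2 := hy0 1 4 1 2 2 2
  have h6 : D 1 4 1 2 2 2 ≤ 0 + D 1 3 1 1 2 2 := hy1 1 3 1 1 2 2
  have h7 : D 1 3 1 1 2 2 ≤ 0 + D 1 2 1 1 1 2 := hy2 1 2 1 1 1 2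
  have h8 : D 1 2 1 1 1 2 ≤ 0 + D 1 1 1 1 1 1 := hy3 1 1 1 1 1 1
  omega

lemma chain_4_6 {D : ℕ → ℕ → ℕ → ℕ → ℕ → ℕ → ℕ} (h : Chain D) :
    D 4 6 3 3 3 3 ≤ 11 := by
  obtain ⟨hx0, hx1, hx2, hx3, hy0, hy1, hy2, hy3, h11, h00⟩ := h
  have h1 : D 4 6 3 3 3 3 ≤ 2 + D 4 5 2 3 3 3 := hy0 4 5 2 3 3 3
  have h2 : D 4 5 2 3 3 3 ≤ 2 + D 4 4 2 2 3 3 := hy1 4 4 2 2 3 3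
  have h3 : D 4 4 2 2 3 3 ≤ 2 + D 4 3 2 2 2 3 := hy2 4 3 2 2 2 3
  have h4 : D 4 3 2 2 2 3 ≤ 2 + D 4 2 2 2 2 2 := hy3 4 2 2 2 2 2
  have h5 : D 4 2 2 2 2 2 ≤ 1 + D 3 2 1 2 2 2 := hx0 3 2 1 2 2 2
  have h6 : D 3 2 1 2 2 2 ≤ 1 + D 2 2 1 1 2 2 := hx1 2 2 1 1 2 2
  have h7 : D 2 2 1 1 2 2 ≤ 1 + D 2 1 1 1 1 2 := hy2 2 1 1 1 1 2
  have h8 : D 2 1 1 1 1 2 ≤ 0 + D 1 1 1 1 1 1 := hx3 1 1 1 1 1 1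
  omega

lemma chain_3_7 {D : ℕ → ℕ → ℕ → ℕ → ℕ → ℕ → ℕ} (h : Chain D) :
    D 3 7 3 3 3 3 ≤ 8 := by
  obtain ⟨hx0, hx1, hx2, hx3, hy0, hy1, hy2, hy3, h11, h00⟩ := h
  have h1 : D 3 7 3 3 3 3 ≤ 1 + D 3 6 2 3 3 3 := hy0 3 6 2 3 3 3
  have h2 : D 3 6 2 3 3 3 ≤ 1 + D 3 5 2 2 3 3 := hy1 3 5 2 2 3 3
  have h3 : D 3 5 2 2 3 3 ≤ 1 + D 3 4 2 2 2 3 := hy2 3 4 2 2 2 3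
  have h4 : D 3 4 2 2 2 3 ≤ 1 + D 3 3 2 2 2 2 := hy3 3 3 2 2 2 2
  have h5 : D 3 3 2 2 2 2 ≤ 2 + D 2 3 1 2 2 2 := hx0 2 3 1 2 2 2
  have h6 : D 2 3 1 2 2 2 ≤ 1 + D 2 2 1 1 2 2 := hy1 2 2 1 1 2 2
  have h7 : D 2 2 1 1 2 2 ≤ 1 + D 2 1 1 1 1 2 := hy2 2 1 1 1 1 2
  have h8 : D 2 1 1 1 1 2 ≤ 0 + D 1 1 1 1 1 1 := hx3 1 1 1 1 1 1
  omega

lemma chain_2_8 {D : ℕ → ℕ → ℕ → ℕ → ℕ → ℕ → ℕ} (h : Chain D) :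
    D 2 8 3 3 3 3 ≤ 3 := by
  obtain ⟨hx0, hx1, hx2, hx3, hy0, hy1, hy2, hy3, h11, h00⟩ := h
  have h1 : D 2 8 3 3 3 3 ≤ 0 + D 2 7 2 3 3 3 := hy0 2 7 2 3 3 3
  have h2 : D 2 7 2 3 3 3 ≤ 0 + D 2 6 2 2 3 3 := hy1 2 6 2 2 3 3
  have h3 : D 2 6 2 2 3 3 ≤ 0 + D 2 5 2 2 2 3 := hy2 2 5 2 2 2 3
  have h4 : D 2 5 2 2 2 3 ≤ 0 + D 2 4 2 2 2 2 := hy3 2 4 2 2 2 2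
  have h5 : D 2 4 2 2 2 2 ≤ 1 + D 2 3 1 2 2 2 := hy0 2 3 1 2 2 2
  have h6 : D 2 3 1 2 2 2 ≤ 1 + D 2 2 1 1 2 2 := hy1 2 2 1 1 2 2
  have h7 : D 2 2 1 1 2 2 ≤ 1 + D 2 1 1 1 1 2 := hy2 2 1 1 1 1 2
  have h8 : D 2 1 1 1 1 2 ≤ 0 + D 1 1 1 1 1 1 := hx3 1 1 1 1 1 1
  omega

lemma chain_1_9 {D : ℕ → ℕ → ℕ → ℕ → ℕ → ℕ → ℕ} (h : Chain D) :
    D 1 9 3 3 3 3 ≤ 0 := by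
  obtain ⟨hx0, hx1, hx2, hx3, hy0, hy1, hy2, hy3, h11, h00⟩ := h
  have h1 : D 1 9 3 3 3 3 ≤ 0 + D 1 8 2 3 3 3 := hy0 1 8 2 3 3 3
  have h2 : D 1 8 2 3 3 3 ≤ 0 + D 1 7 2 2 3 3 := hy1 1 7 2 2 3 3
  have h3 : D 1 7 2 2 3 3 ≤ 0 + D 1 6 2 2 2 3 := hy2 1 6 2 2 2 3
  have h4 : D 1 6 2 2 2 3 ≤ 0 + D 1 5 2 2 2 2 := hy3 1 5 2 2 2 2
  have h5 : D 1 5 2 2 2 2 ≤ 0 + D 1 4 1 2 2 2 := hy0 1 4 1 2 2 2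
  have h6 : D 1 4 1 2 2 2 ≤ 0 + D 1 3 1 1 2 2 := hy1 1 3 1 1 2 2
  have h7 : D 1 3 1 1 2 2 ≤ 0 + D 1 2 1 1 1 2 := hy2 1 2 1 1 1 2
  have h8 : D 1 2 1 1 1 2 ≤ 0 + D 1 1 1 1 1 1 := hy3 1 1 1 1 1 1
  omega

lemma chain_0_10 {D : ℕ → ℕ → ℕ → ℕ → ℕ → ℕ → ℕ} (h : Chain D) :
    D 0 10 3 3 3 3 ≤ 0 := by
  obtain ⟨hx0, hx1, hx2, hx3, hy0, hy1, hy2, hy3, h11, h00⟩ := h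
  have h1 : D 0 10 3 3 3 3 ≤ 0 + D 0 9 2 3 3 3 := hy0 0 9 2 3 3 3
  have h2 : D 0 9 2 3 3 3 ≤ 0 + D 0 8 2 2 3 3 := hy1 0 8 2 2 3 3
  have h3 : D 0 8 2 2 3 3 ≤ 0 + D 0 7 2 2 2 3 := hy2 0 7 2 2 2 3
  have h4 : D 0 7 2 2 2 3 ≤ 0 + D 0 6 2 2 2 2 := hy3 0 6 2 2 2 2
  have h5 : D 0 6 2 2 2 2 ≤ 0 + D 0 5 1 2 2 2 := hy0 0 5 1 2 2 2
  have h6 : D 0 5 1 2 2 2 ≤ 0 + D 0 4 1 1 2 2 := hy1 0 4 1 1 2 2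
  have h7 : D 0 4 1 1 2 2 ≤ 0 + D 0 3 1 1 1 2 := hy2 0 3 1 1 1 2
  have h8 : D 0 3 1 1 1 2 ≤ 0 + D 0 2 1 1 1 1 := hy3 0 2 1 1 1 1
  have h9 : D 0 2 1 1 1 1 ≤ 0 + D 0 1 0 1 1 1 := hy0 0 1 0 1 1 1
  have h10 : D 0 1 0 1 1 1 ≤ 0 + D 0 0 0 0 1 1 := hy1 0 0 0 0 1 1
  omega

lemma chain_frm (s t : ℂ) (hs0 : s ≠ 0) (hs1 : s ≠ 1) (ht0 : t ≠ 0) (ht1 : t ≠ 1) (hst : s ≠ t) :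
    Chain (fun a b p q r u => Module.finrank ℂ (bigr (frm s) (frm t) a b ![p, q, r, u])) := by
  have hs := frm_cfg s hs0 hs1
  have ht := frm_cfg t ht0 ht1
  have u0 : ∀ p q r u : ℕ, Function.update ![p + 1, q, r, u] 0 (![p + 1, q, r, u] 0 - 1)
      = ![p, q, r, u] := by
    intro p q r u; ext i; fin_cases i <;> rfl
  have u1 : ∀ p q r u : ℕ, Function.update ![p, q + 1, r, u] 1 (![p, q + 1, r, u] 1 - 1)
      = ![p, q, r, u] := by
    intro p q r u; ext i; fin_cases i <;> rfl
  have u2 : ∀ p q r u : ℕ, Function.update ![p, q, r + 1, u] 2 (![p, q, r + 1, u] 2 - 1)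
      = ![p, q, r, u] := by
    intro p q r u; ext i; fin_cases i <;> rfl
  have u3 : ∀ p q r u : ℕ, Function.update ![p, q, r, u + 1] 3 (![p, q, r, u + 1] 3 - 1)
      = ![p, q, r, u] := by
    intro p q r u; ext i; fin_cases i <;> rfl
  constructor
  · intro a b p q r u
    have := xstep hs ht a b ![p + 1, q, r, u] 0
    rwa [u0] at this
  · intro a b p q r u
    have := xstep hs ht a b ![p, q + 1, r, u] 1
    rwa [u1] at this
  · intro a b p q r u
    have := xstep hs ht a b ![p, q, r + 1, u] 2
    rwa [u2] at this
  · intro a b p q r u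
    have := xstep hs ht a b ![p, q, r, u + 1] 3
    rwa [u3] at this
  · intro a b p q r u
    have := ystep hs ht a b ![p + 1, q, r, u] 0
    rwa [u0] at this
  · intro a b p q r u
    have := ystep hs ht a b ![p, q + 1, r, u] 1
    rwa [u1] at this
  · intro a b p q r u
    have := ystep hs ht a b ![p, q, r + 1, u] 2
    rwa [u2] at this
  · intro a b p q r u
    have := ystep hs ht a b ![p, q, r, u + 1] 3
    rwa [u3] at this
  · exact base11 s t hst
  · exact base00 _ _ _ (by simp)

/-! ### The full system in normalized coordinates -/

/-- Forms of degree ten with triple lines, in normalized coordinates. -/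
def stdSys (A B : Fin 4 → Matrix (Fin 2) (Fin 2) ℂ) : Submodule ℂ R3 :=
  homogeneousSubmodule (Fin 4) ℂ 10 ⊓
    ⨅ i, (ordSub 3).comap (lsub (blk (A i) (B i))).toLinearMap

lemma mem_stdSys (A B : Fin 4 → Matrix (Fin 2) (Fin 2) ℂ) (F : R3) :
    F ∈ stdSys A B ↔ F.IsHomogeneous 10 ∧ ∀ i, lsub (blk (A i) (B i)) F ∈ ordSub 3 := by
  simp [stdSys, Submodule.mem_iInf]

instance finite_stdSys (A B : Fin 4 → Matrix (Fin 2) (Fin 2) ℂ) :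
    Module.Finite ℂ (stdSys A B) := finite_of_le_homogeneous 10 _ inf_le_left

lemma xcomp_mem (A B : Fin 4 → Matrix (Fin 2) (Fin 2) ℂ) (a : Fin 11) (F : R3)
    (hF : F ∈ stdSys A B) : xcomp a F ∈ bigr A B a (10 - a) ![3, 3, 3, 3] := by
  rw [mem_stdSys, isHomogeneous_iff] at hF
  rw [mem_bigr]
  constructor
  · intro d hd
    rw [coeff_xcomp] at hd
    split_ifs at hd with h
    · have := hF.1 d hd
      omega
    · exact absurd rfl hd
  · intro i
    have h3 : (![3, 3, 3, 3] : Fin 4 → ℕ) i = 3 := by fin_cases i <;> rfl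
    rw [h3, lsub_xcomp]
    intro d hd
    rw [coeff_xcomp, hF.2 i d hd]
    simp

lemma upper_sum (A B : Fin 4 → Matrix (Fin 2) (Fin 2) ℂ) :
    Module.finrank ℂ (stdSys A B) ≤
      ∑ a : Fin 11, Module.finrank ℂ (bigr A B a (10 - a) ![3, 3, 3, 3]) := by
  rw [← Module.finrank_pi_fintype ℂ]
  let f : stdSys A B →ₗ[ℂ] ((a : Fin 11) → bigr A B a (10 - a) ![3, 3, 3, 3]) :=
    LinearMap.pi fun a => (xcomp a).restrict (xcomp_mem A B a)
  have hf : ∀ F a, (f F a : R3) = xcomp a F := fun F a => rfl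
  apply LinearMap.finrank_le_finrank_of_injective (f := f)
  rw [← LinearMap.ker_eq_bot, LinearMap.ker_eq_bot']
  rintro ⟨F, hF⟩ h
  apply Subtype.ext
  change F = 0
  ext d
  by_contra hd
  rw [coeff_zero] at hd
  rw [mem_stdSys, isHomogeneous_iff] at hF
  have h10 := hF.1 d hd
  have h1 : xcomp (d 0 + d 1) F = 0 := by
    have := hf ⟨F, by rw [mem_stdSys, isHomogeneous_iff]; exact hF⟩ ⟨d 0 + d 1, by omega⟩
    rw [h] at this
    exact this.symm
  have h2 := coeff_xcomp (d 0 + d 1) F d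
  rw [h1, if_pos rfl, coeff_zero] at h2
  exact hd h2.symm

lemma upper_bound (s t : ℂ) (hs0 : s ≠ 0) (hs1 : s ≠ 1) (ht0 : t ≠ 0) (ht1 : t ≠ 1)
    (hst : s ≠ t) : Module.finrank ℂ (stdSys (frm s) (frm t)) ≤ 56 := by
  have h := upper_sum (frm s) (frm t)
  have c1 := chain_frm s t hs0 hs1 ht0 ht1 hst
  have c2 := chain_frm t s ht0 ht1 hs0 hs1 hst.symm
  have a0 := chain_0_10 c1
  have a1 := chain_1_9 c1
  have a2 := chain_2_8 c1
  have a3 := chain_3_7 c1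
  have a4 := chain_4_6 c1
  have a5 := chain_5_5 c1
  have b0 := (finrank_swp (frm s) (frm t) 10 0 ![3, 3, 3, 3]).trans (chain_0_10 c2)
  have b1 := (finrank_swp (frm s) (frm t) 9 1 ![3, 3, 3, 3]).trans (chain_1_9 c2)
  have b2 := (finrank_swp (frm s) (frm t) 8 2 ![3, 3, 3, 3]).trans (chain_2_8 c2)
  have b3 := (finrank_swp (frm s) (frm t) 7 3 ![3, 3, 3, 3]).trans (chain_3_7 c2)
  have b4 := (finrank_swp (frm s) (frm t) 6 4 ![3, 3, 3, 3]).trans (chain_4_6 c2)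
  rw [Fin.sum_univ_def] at h
  simp only [List.finRange_succ, List.finRange_zero, List.map_cons, List.map_nil, List.sum_cons,
    List.sum_nil] at h
  have h' : Module.finrank ℂ (stdSys (frm s) (frm t)) ≤
    Module.finrank ℂ (bigr (frm s) (frm t) 0 10 ![3, 3, 3, 3]) +
    (Module.finrank ℂ (bigr (frm s) (frm t) 1 9 ![3, 3, 3, 3]) +
    (Module.finrank ℂ (bigr (frm s) (frm t) 2 8 ![3, 3, 3, 3]) +
    (Module.finrank ℂ (bigr (frm s) (frm t) 3 7 ![3, 3, 3, 3]) +
    (Module.finrank ℂ (bigr (frm s) (frm t) 4 6 ![3, 3, 3, 3]) +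
    (Module.finrank ℂ (bigr (frm s) (frm t) 5 5 ![3, 3, 3, 3]) +
    (Module.finrank ℂ (bigr (frm s) (frm t) 6 4 ![3, 3, 3, 3]) +
    (Module.finrank ℂ (bigr (frm s) (frm t) 7 3 ![3, 3, 3, 3]) +
    (Module.finrank ℂ (bigr (frm s) (frm t) 8 2 ![3, 3, 3, 3]) +
    (Module.finrank ℂ (bigr (frm s) (frm t) 9 1 ![3, 3, 3, 3]) +
    (Module.finrank ℂ (bigr (frm s) (frm t) 10 0 ![3, 3, 3, 3]) + 0)))))))))) := h
  omega

/-! ### The lower bound -/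

/-- Indices of the monomials of degree ten whose degree in the first block lies in `[2, 8]`. -/
abbrev Idx : Type :=
  {t : Fin 7 × Fin 9 × Fin 9 // t.2.1.val ≤ t.1.val + 2 ∧ t.2.2.val ≤ 8 - t.1.val}

/-- Indices of the conditions imposed by a triple line. -/
abbrev Idx3 : Type := Fin 7 × {t : Fin 3 × Fin 3 // t.1.val + t.2.val < 3}

/-- The monomial of an index. -/
def mon (t : Idx) : Fin 4 →₀ ℕ :=
  mk4 (t.1.1 + 2 - t.1.2.1) t.1.2.1 (8 - t.1.1 - t.1.2.2) t.1.2.2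

lemma mon_injective : Function.Injective mon := by
  rintro ⟨⟨a, i, j⟩, h⟩ ⟨⟨a', i', j'⟩, h'⟩ heq
  have h0 := DFunLike.congr_fun heq 0
  have h1 := DFunLike.congr_fun heq 1
  have h3 := DFunLike.congr_fun heq 3
  simp only [mon, mk4_0, mk4_1, mk4_3] at h0 h1 h3
  simp only at h h'
  apply Subtype.ext
  ext <;> simp only <;> omega

/-- The polynomial with given coefficients. -/
def polyOf : (Idx → ℂ) →ₗ[ℂ] R3 := ∑ t : Idx, (monomial (mon t)).comp (LinearMap.proj t)

lemma coeff_polyOf (f : Idx → ℂ) (d : Fin 4 →₀ ℕ) :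
    coeff d (polyOf f) = ∑ t : Idx, if mon t = d then f t else 0 := by
  simp [polyOf, LinearMap.sum_apply, coeff_sum, coeff_monomial]

lemma polyOf_injective : Function.Injective polyOf := by
  intro f g h
  funext t
  have h1 := congrArg (coeff (mon t)) h
  rw [coeff_polyOf, coeff_polyOf] at h1
  simpa [mon_injective.eq_iff] using h1

lemma coeff_polyOf_ne (f : Idx → ℂ) (d : Fin 4 →₀ ℕ) (h : coeff d (polyOf f) ≠ 0) :
    2 ≤ d 0 + d 1 ∧ d 0 + d 1 ≤ 8 ∧ d 0 + d 1 + d 2 + d 3 = 10 := by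
  rw [coeff_polyOf] at h
  obtain ⟨t, -, ht⟩ := Finset.exists_ne_zero_of_sum_ne_zero h
  have h1 : mon t = d := by
    by_contra h2
    exact ht (if_neg h2)
  subst h1
  obtain ⟨⟨a, i, j⟩, hh⟩ := t
  simp only [mon, mk4_0, mk4_1, mk4_2, mk4_3]
  simp only at hh
  omega

lemma lower_bound (A B : Fin 4 → Matrix (Fin 2) (Fin 2) ℂ) :
    56 ≤ Module.finrank ℂ (stdSys A B) := by
  let g : (Idx → ℂ) →ₗ[ℂ] (Fin 4 × Idx3 → ℂ) :=
    (LinearMap.pi fun k : Fin 4 × Idx3 =>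
      (lcoeff ℂ (mk4 (k.2.1 + 2 - k.2.2.1.1) k.2.2.1.1 (8 - k.2.1 - k.2.2.1.2) k.2.2.1.2)).comp
        (lsub (blk (A k.1) (B k.1))).toLinearMap).comp polyOf
  have hg : ∀ f k, g f k =
    coeff (mk4 (k.2.1 + 2 - k.2.2.1.1) k.2.2.1.1 (8 - k.2.1 - k.2.2.1.2) k.2.2.1.2)
      (lsub (blk (A k.1) (B k.1)) (polyOf f)) := fun f k => rfl
  have h1 := LinearMap.finrank_range_add_finrank_ker g
  have h2 : Module.finrank ℂ (LinearMap.range g) ≤ 168 := by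
    have h := Submodule.finrank_le (LinearMap.range g)
    have hc : Fintype.card {t : Fin 3 × Fin 3 // t.1.val + t.2.val < 3} = 6 := by decide
    simpa [hc] using h
  have h3 : Module.finrank ℂ (Idx → ℂ) = 224 := by
    rw [Module.finrank_fintype_fun_eq_card]
    decide +kernel
  have h4 : (LinearMap.ker g).map polyOf ≤ stdSys A B := by
    rintro _ ⟨f, hf, rfl⟩
    rw [mem_stdSys]
    have hhom : (polyOf f).IsHomogeneous 10 := by
      rw [isHomogeneous_iff]
      intro d hd
      exact (coeff_polyOf_ne f d hd).2.2
    refine ⟨hhom, ?_⟩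
    intro i d hd
    by_contra hne
    have hd10 := (isHomogeneous_iff _ _).mp (lsub_isHomogeneous (blk (A i) (B i)) hhom) d hne
    have hr : 2 ≤ d 0 + d 1 ∧ d 0 + d 1 ≤ 8 := by
      by_contra hcon
      have hz : xcomp (d 0 + d 1) (polyOf f) = 0 := by
        ext e
        rw [coeff_xcomp, coeff_zero]
        split_ifs with he
        · by_contra hne'
          have := coeff_polyOf_ne f e hne'
          omega
        · rfl
      have hz2 := lsub_xcomp (A i) (B i) (d 0 + d 1) (polyOf f)
      rw [hz, map_zero] at hz2
      have hz3 := coeff_xcomp (d 0 + d 1) (lsub (blk (A i) (B i)) (polyOf f)) d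
      rw [← hz2, if_pos rfl, coeff_zero] at hz3
      exact hne hz3.symm
    have hk := congrFun (LinearMap.mem_ker.mp hf)
      (i, ⟨d 0 + d 1 - 2, by omega⟩, ⟨(⟨d 1, by omega⟩, ⟨d 3, by omega⟩), hd⟩)
    rw [hg] at hk
    apply hne
    have hd' : mk4 (d 0 + d 1 - 2 + 2 - d 1) (d 1) (8 - (d 0 + d 1 - 2) - d 3) (d 3) = d := by
      conv_rhs => rw [eq_mk4 d]
      congr 1 <;> omega
    rw [← hd']
    exact hk
  have h5 := Submodule.finrank_mono h4
  have h6 := (Submodule.equivMapOfInjective polyOf polyOf_injective (LinearMap.ker g)).finrank_eq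
  omega

/-! ### Reduction of four lines to the normalized configuration -/

lemma mulVec_mem_iff (M N : Matrix (Fin 4) (Fin 4) ℂ) (h : M * N = 1) (a b : C4)
    (h0 : M.mulVec ![1, 0, 0, 0] ∈ Submodule.span ℂ {a, b})
    (h2 : M.mulVec ![0, 0, 1, 0] ∈ Submodule.span ℂ {a, b}) (w : C4) :
    M.mulVec w ∈ Submodule.span ℂ {a, b} ↔ w ∈ stdLine := by
  have hinj : Function.Injective M.mulVec := by
    intro x y hxy
    have := congrArg N.mulVec hxy
    simpa [Matrix.mulVec_mulVec, mul_eq_one_comm.mp h] using this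
  have hw : ∀ w : C4, w ∈ stdLine ↔
      w = w 0 • (![1, 0, 0, 0] : C4) + w 2 • (![0, 0, 1, 0] : C4) := by
    intro w
    constructor
    · rintro ⟨h1, h3⟩
      ext i
      fin_cases i <;> simp [h1, h3]
    · intro hw
      constructor
      · have := congrFun hw 1
        simpa using this
      · have := congrFun hw 3
        simpa using this
  have hle : stdLine.map M.mulVecLin ≤ Submodule.span ℂ {a, b} := by
    rintro _ ⟨w, hws, rfl⟩
    rw [(hw w).mp hws, map_add, map_smul, map_smul]
    exact Submodule.add_mem _ (Submodule.smul_mem _ _ h0) (Submodule.smul_mem _ _ h2)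
  have hrank : Module.finrank ℂ (Submodule.span ℂ {a, b}) ≤ 2 := by
    classical
    have := finrank_span_finset_le_card (R := ℂ) ({a, b} : Finset C4)
    have h3 : (({a, b} : Finset C4) : Set C4) = {a, b} := by simp
    rw [Set.finrank, h3] at this
    exact this.trans Finset.card_le_two
  have hstd : 2 ≤ Module.finrank ℂ stdLine := by
    let f : (Fin 2 → ℂ) →ₗ[ℂ] stdLine :=
      { toFun := fun x => ⟨![x 0, 0, x 1, 0], by simp [stdLine]⟩
        map_add' := by
          intro x y
          apply Subtype.ext
          ext i
          fin_cases i <;> simp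
        map_smul' := by
          intro c x
          apply Subtype.ext
          ext i
          fin_cases i <;> simp }
    have hf : Function.Injective f := by
      intro x y hxy
      have h1 := congrArg Subtype.val hxy
      have e0 := congrFun h1 0
      have e2 := congrFun h1 2
      ext i
      fin_cases i
      · exact e0
      · exact e2
    have := LinearMap.finrank_le_finrank_of_injective hf
    simpa using this
  have heq : stdLine.map M.mulVecLin = Submodule.span ℂ {a, b} := by
    apply Submodule.eq_of_le_of_finrank_le hle
    have h9 := (Submodule.equivMapOfInjective M.mulVecLin hinj stdLine).finrank_eq
    exact hrank.trans (hstd.trans (le_of_eq h9))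
  rw [← heq]
  constructor
  · rintro ⟨w', hw', he⟩
    rwa [← hinj he]
  · intro hws
    exact ⟨w, hws, rfl⟩

lemma finrank_linSys (G : Matrix (Fin 4) (Fin 4) ℂ) (hG : G.det ≠ 0) (s t : ℂ)
    (hs0 : s ≠ 0) (hs1 : s ≠ 1) (ht0 : t ≠ 0) (ht1 : t ≠ 1) (hst : s ≠ t)
    (v : Fin 4 → Fin 2 → C4)
    (h1 : ∀ i, (G * blk (frm s i) (frm t i)).mulVec ![1, 0, 0, 0] ∈
      Submodule.span ℂ {v i 0, v i 1})
    (h2 : ∀ i, (G * blk (frm s i) (frm t i)).mulVec ![0, 0, 1, 0] ∈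
      Submodule.span ℂ {v i 0, v i 1}) :
    Module.finrank ℂ (linSys 10 (fun i => Submodule.span ℂ {v i 0, v i 1}) ![3, 3, 3, 3]) = 56 := by
  have hGi : G * G⁻¹ = 1 := Matrix.mul_nonsing_inv _ (isUnit_iff_ne_zero.mpr hG)
  have key : ∀ F : R3, F ∈ linSys 10 (fun i => Submodule.span ℂ {v i 0, v i 1}) ![3, 3, 3, 3] ↔
      lsub G F ∈ stdSys (frm s) (frm t) := by
    intro F
    rw [mem_stdSys]
    have hi : ∀ i, F ∈ lineIdeal (Submodule.span ℂ {v i 0, v i 1}) ^ 3 ↔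
        lsub (blk (frm s i) (frm t i)) (lsub G F) ∈ ordSub 3 := by
      intro i
      have hM : (G * blk (frm s i) (frm t i)) * (blk (frm' s i) (frm' t i) * G⁻¹) = 1 := by
        rw [Matrix.mul_assoc, ← Matrix.mul_assoc (blk _ _) (blk _ _), blk_mul,
          (frm_cfg s hs0 hs1).inv, (frm_cfg t ht0 ht1).inv, blk_one, Matrix.one_mul, hGi]
      rw [mem_pow_line_iff _ _ hM _ (mulVec_mem_iff _ _ hM _ _ (h1 i) (h2 i)), lsub_lsub]
    have h3 : ∀ i : Fin 4, (![3, 3, 3, 3] : Fin 4 → ℕ) i = 3 := by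
      intro i
      fin_cases i <;> rfl
    have hhom : F.IsHomogeneous 10 ↔ (lsub G F).IsHomogeneous 10 := by
      constructor
      · exact lsub_isHomogeneous G
      · intro h
        have := lsub_isHomogeneous G⁻¹ h
        rwa [lsub_lsub, hGi, lsub_one] at this
    rw [← hhom]
    simp only [linSys, Submodule.mem_inf, Submodule.mem_iInf, Submodule.restrictScalars_mem, h3,
      mem_homogeneousSubmodule, hi]
  have hmap : (linSys 10 (fun i => Submodule.span ℂ {v i 0, v i 1}) ![3, 3, 3, 3]).map
      (lsubEquiv G G⁻¹ hGi).toLinearEquiv.toLinearMap = stdSys (frm s) (frm t) := by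
    ext F
    constructor
    · rintro ⟨H, hH, rfl⟩
      exact (key H).mp hH
    · intro hF
      refine ⟨lsub G⁻¹ F, ?_, ?_⟩
      · apply (key _).mpr
        rwa [lsub_lsub, mul_eq_one_comm.mp hGi, lsub_one]
      · change lsub G (lsub G⁻¹ F) = F
        rw [lsub_lsub, mul_eq_one_comm.mp hGi, lsub_one]
  have := LinearEquiv.finrank_map_eq (lsubEquiv G G⁻¹ hGi).toLinearEquiv
    (linSys 10 (fun i => Submodule.span ℂ {v i 0, v i 1}) ![3, 3, 3, 3])
  rw [← this]
  have e : Module.finrank ℂ ((linSys 10 (fun i => Submodule.span ℂ {v i 0, v i 1})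
    ![3, 3, 3, 3]).map (lsubEquiv G G⁻¹ hGi).toLinearEquiv.toLinearMap) = 56 := by
    rw [hmap]
    exact le_antisymm (upper_bound s t hs0 hs1 ht0 ht1 hst) (lower_bound _ _)
  exact e

/-- The matrix whose rows span the lines `i` and `j`. -/
def pairMat {S : Type*} (v : Fin 4 → Fin 2 → Fin 4 → S) (i j : Fin 4) :
    Matrix (Fin 4) (Fin 4) S := Matrix.of ![v i 0, v i 1, v j 0, v j 1]

/-- Coordinates (up to a scalar) of the spanning vectors in the basis of the first two lines. -/
def crd {S : Type*} [CommRing S] (v : Fin 4 → Fin 2 → Fin 4 → S) (i : Fin 4) (k : Fin 2) :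
    Fin 4 → S := Matrix.vecMul (v i k) (pairMat v 0 1).adjugate

/-- First half of the coordinates. -/
def upM {S : Type*} [CommRing S] (v : Fin 4 → Fin 2 → Fin 4 → S) (i : Fin 4) :
    Matrix (Fin 2) (Fin 2) S := !![crd v i 0 0, crd v i 1 0; crd v i 0 1, crd v i 1 1]

/-- Second half of the coordinates. -/
def loM {S : Type*} [CommRing S] (v : Fin 4 → Fin 2 → Fin 4 → S) (i : Fin 4) :
    Matrix (Fin 2) (Fin 2) S := !![crd v i 0 2, crd v i 1 2; crd v i 0 3, crd v i 1 3]

/-- The matrix whose eigenvectors give the transversals. -/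
def trM {S : Type*} [CommRing S] (v : Fin 4 → Fin 2 → Fin 4 → S) : Matrix (Fin 2) (Fin 2) S :=
  (loM v 2).adjugate * loM v 3 * (upM v 3).adjugate * upM v 2

/-- The polynomial expressing generality. -/
def genP {S : Type*} [CommRing S] (v : Fin 4 → Fin 2 → Fin 4 → S) : S :=
  (∏ i, ∏ j, if i = j then 1 else (pairMat v i j).det) *
    ((upM v 2).det * (upM v 3).det * (loM v 2).det) *
    ((trM v).trace ^ 2 - 4 * (trM v).det)

lemma map_pairMat {S T : Type*} [CommRing S] [CommRing T] (f : S →+* T)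
    (v : Fin 4 → Fin 2 → Fin 4 → S) (i j : Fin 4) :
    f.mapMatrix (pairMat v i j) = pairMat (fun i k l => f (v i k l)) i j := by
  ext a b
  fin_cases a <;> rfl

lemma map_crd {S T : Type*} [CommRing S] [CommRing T] (f : S →+* T)
    (v : Fin 4 → Fin 2 → Fin 4 → S) (i : Fin 4) (k : Fin 2) (l : Fin 4) :
    f (crd v i k l) = crd (fun i k l => f (v i k l)) i k l := by
  unfold crd
  rw [← map_pairMat, ← RingHom.map_adjugate, RingHom.map_vecMul]
  rfl

lemma map_upM {S T : Type*} [CommRing S] [CommRing T] (f : S →+* T)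
    (v : Fin 4 → Fin 2 → Fin 4 → S) (i : Fin 4) :
    f.mapMatrix (upM v i) = upM (fun i k l => f (v i k l)) i := by
  ext a b
  fin_cases a <;> fin_cases b <;> exact map_crd f v _ _ _

lemma map_loM {S T : Type*} [CommRing S] [CommRing T] (f : S →+* T)
    (v : Fin 4 → Fin 2 → Fin 4 → S) (i : Fin 4) :
    f.mapMatrix (loM v i) = loM (fun i k l => f (v i k l)) i := by
  ext a b
  fin_cases a <;> fin_cases b <;> exact map_crd f v _ _ _

lemma map_trM {S T : Type*} [CommRing S] [CommRing T] (f : S →+* T)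
    (v : Fin 4 → Fin 2 → Fin 4 → S) :
    f.mapMatrix (trM v) = trM (fun i k l => f (v i k l)) := by
  unfold trM
  simp only [map_mul, RingHom.map_adjugate, map_upM, map_loM]

lemma map_genP {S T : Type*} [CommRing S] [CommRing T] (f : S →+* T)
    (v : Fin 4 → Fin 2 → Fin 4 → S) :
    f (genP v) = genP (fun i k l => f (v i k l)) := by
  have htr : f (trM v).trace = (trM (fun i k l => f (v i k l))).trace := by
    rw [← map_trM, Matrix.trace, map_sum]
    rfl
  unfold genP
  simp only [map_mul, map_sub, map_pow, map_prod, htr, RingHom.map_det, map_upM, map_loM, map_trM,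
    apply_ite f, map_one, map_pairMat, map_ofNat]

/-- A sample configuration. -/
def sampleV : Fin 4 → Fin 2 → Fin 4 → ℤ :=
  ![![![1, 0, 0, 0], ![0, 1, 0, 0]], ![![0, 0, 1, 0], ![0, 0, 0, 1]],
    ![![1, 0, 1, 0], ![0, 1, 0, 1]], ![![1, 0, 2, 0], ![0, 1, 0, 3]]]

lemma genP_sampleV : genP sampleV ≠ 0 := by
  decide +kernel

lemma genP_X_ne_zero :
    genP (fun i k l => (X (i, k, l) : MvPolynomial (Fin 4 × Fin 2 × Fin 4) ℂ)) ≠ 0 := by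
  intro h
  have h1 := congrArg (eval fun p => ((sampleV p.1 p.2.1 p.2.2 : ℤ) : ℂ)) h
  rw [map_genP] at h1
  simp only [eval_X, map_zero] at h1
  have h2 := map_genP (Int.castRingHom ℂ) sampleV
  simp only [eq_intCast] at h2
  rw [← h2] at h1
  exact genP_sampleV (by exact_mod_cast h1)

lemma pair_indep (v : Fin 4 → Fin 2 → C4) (i j : Fin 4) (h : (pairMat v i j).det ≠ 0)
    (a b c d : ℂ) (h0 : a • v i 0 + b • v i 1 + c • v j 0 + d • v j 1 = 0) :
    a = 0 ∧ b = 0 ∧ c = 0 ∧ d = 0 := by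
  have h1 := Matrix.linearIndependent_rows_of_det_ne_zero h
  rw [Fintype.linearIndependent_iff] at h1
  have h2 := h1 ![a, b, c, d] (by
    rw [Fin.sum_univ_four]
    exact h0)
  exact ⟨h2 0, h2 1, h2 2, h2 3⟩

lemma pair_disjoint (v : Fin 4 → Fin 2 → C4) (i j : Fin 4) (h : (pairMat v i j).det ≠ 0) :
    Submodule.span ℂ {v i 0, v i 1} ⊓ Submodule.span ℂ {v j 0, v j 1} = ⊥ := by
  rw [eq_bot_iff]
  rintro x ⟨h1, h2⟩
  obtain ⟨a, b, hab⟩ := Submodule.mem_span_pair.mp h1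
  obtain ⟨c, d, hcd⟩ := Submodule.mem_span_pair.mp h2
  have := pair_indep v i j h a b (-c) (-d) (by
    have : a • v i 0 + b • v i 1 + -c • v j 0 + -d • v j 1 =
      (a • v i 0 + b • v i 1) - (c • v j 0 + d • v j 1) := by module
    rw [this, hab, hcd, sub_self])
  rw [Submodule.mem_bot, ← hab, this.1, this.2.1]
  simp

lemma pair_linearIndependent (v : Fin 4 → Fin 2 → C4) (i j : Fin 4)
    (h : (pairMat v i j).det ≠ 0) : LinearIndependent ℂ ![v i 0, v i 1] := by
  rw [LinearIndependent.pair_iff]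
  intro a b hab
  have := pair_indep v i j h a b 0 0 (by simpa using hab)
  exact ⟨this.1, this.2.1⟩

lemma exists_eigen (N : Matrix (Fin 2) (Fin 2) ℂ) (h : N.trace ^ 2 - 4 * N.det ≠ 0) :
    ∃ (r r' : ℂ) (x x' : Fin 2 → ℂ), r ≠ r' ∧ N.mulVec x = r • x ∧ N.mulVec x' = r' • x' ∧
      x 0 * x' 1 - x 1 * x' 0 ≠ 0 := by
  obtain ⟨e, he⟩ := IsAlgClosed.exists_pow_nat_eq (N.trace ^ 2 - 4 * N.det) (n := 2) (by norm_num)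
  have he0 : e ≠ 0 := by
    rintro rfl
    apply h
    rw [← he]
    norm_num
  have hev : ∀ r : ℂ, r ^ 2 - N.trace * r + N.det = 0 → ∃ x : Fin 2 → ℂ, x ≠ 0 ∧
      N.mulVec x = r • x := by
    intro r hr
    have hdet : (N - r • (1 : Matrix (Fin 2) (Fin 2) ℂ)).det = 0 := by
      rw [Matrix.trace_fin_two, Matrix.det_fin_two] at hr
      rw [Matrix.det_fin_two]
      simp
      linear_combination hr
    obtain ⟨x, hx, hNx⟩ := Matrix.exists_mulVec_eq_zero_iff.mpr hdet
    refine ⟨x, hx, ?_⟩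
    rw [Matrix.sub_mulVec, Matrix.smul_mulVec, Matrix.one_mulVec, sub_eq_zero] at hNx
    exact hNx
  obtain ⟨x, hx, hNx⟩ := hev ((N.trace + e) / 2) (by linear_combination he / 4)
  obtain ⟨x', hx', hNx'⟩ := hev ((N.trace - e) / 2) (by linear_combination he / 4)
  refine ⟨_, _, x, x', ?_, hNx, hNx', ?_⟩
  · intro hh
    apply he0
    linear_combination hh
  · intro hw
    have a0 := congrFun hNx 0
    have a1 := congrFun hNx 1
    have b0 := congrFun hNx' 0
    have b1 := congrFun hNx' 1
    simp only [Matrix.mulVec, dotProduct, Fin.sum_univ_two, Pi.smul_apply, smul_eq_mul] at a0 a1 b0 b1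
    have hz : ∀ j k, x j * x' k = 0 := by
      intro j k
      have : e * (x j * x' k) = 0 := by
        fin_cases j <;> fin_cases k <;> simp only [Fin.zero_eta, Fin.mk_one, Fin.isValue]
        · linear_combination (-x' 0) * a0 + x 0 * b0 - N 0 1 * hw
        · linear_combination (-x' 1) * a0 + x 1 * b0 + (N 0 0 - (N.trace - e) / 2) * hw
        · linear_combination (-x' 0) * a1 + x 0 * b1 + ((N.trace - e) / 2 - N 1 1) * hw
        · linear_combination (-x' 1) * a1 + x 1 * b1 + N 1 0 * hw
      exact (mul_eq_zero.mp this).resolve_left he0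
    apply hx
    ext j
    by_contra hj
    apply hx'
    ext k
    exact (mul_eq_zero.mp (hz j k)).resolve_left hj


/-- The point of the line spanned by `a`, `b` with coordinates `x`. -/
def pt (a b : C4) (x : Fin 2 → ℂ) : C4 := x 0 • a + x 1 • b

lemma pt_mem (a b : C4) (x : Fin 2 → ℂ) : pt a b x ∈ Submodule.span ℂ {a, b} :=
  Submodule.mem_span_pair.mpr ⟨_, _, rfl⟩

lemma pt_smul (a b : C4) (c : ℂ) (x : Fin 2 → ℂ) : pt a b (c • x) = c • pt a b x := by
  simp only [pt, Pi.smul_apply, smul_eq_mul]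
  module

lemma crd_pairMat (v : Fin 4 → Fin 2 → C4) (i : Fin 4) (k : Fin 2) :
    crd v i k 0 • v 0 0 + crd v i k 1 • v 0 1 + crd v i k 2 • v 1 0 + crd v i k 3 • v 1 1 =
      (pairMat v 0 1).det • v i k := by
  have h : Matrix.vecMul (crd v i k) (pairMat v 0 1) = (pairMat v 0 1).det • v i k := by
    rw [crd, Matrix.vecMul_vecMul, Matrix.adjugate_mul, Matrix.vecMul_smul, Matrix.vecMul_one]
  rw [← h]
  ext l
  simp [Matrix.vecMul, dotProduct, Fin.sum_univ_four, pairMat]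

lemma pt_upM_loM (v : Fin 4 → Fin 2 → C4) (i : Fin 4) (x : Fin 2 → ℂ) :
    pt (v 0 0) (v 0 1) ((upM v i).mulVec x) + pt (v 1 0) (v 1 1) ((loM v i).mulVec x) =
      (pairMat v 0 1).det • pt (v i 0) (v i 1) x := by
  have h0 := crd_pairMat v i 0
  have h1 := crd_pairMat v i 1
  simp only [pt, smul_add, smul_comm (pairMat v 0 1).det, ← h0, ← h1]
  simp only [upM, loM, Matrix.mulVec, dotProduct, Fin.sum_univ_two, Matrix.of_apply,
    Matrix.cons_val_zero, Matrix.cons_val_one, Matrix.cons_val', Matrix.cons_val_fin_one]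
  module

lemma mulVec_ne_zero_of_det {n : Type*} [Fintype n] [DecidableEq n] (M : Matrix n n ℂ)
    (h : M.det ≠ 0) (x : n → ℂ) (hx : x ≠ 0) : M.mulVec x ≠ 0 := by
  intro h0
  exact h (Matrix.exists_mulVec_eq_zero_iff.mp ⟨x, hx, h0⟩)

lemma transversal (v : Fin 4 → Fin 2 → C4) (hp : ∀ i j, i ≠ j → (pairMat v i j).det ≠ 0)
    (hu2 : (upM v 2).det ≠ 0) (hu3 : (upM v 3).det ≠ 0) (hl2 : (loM v 2).det ≠ 0)
    (r : ℂ) (x : Fin 2 → ℂ) (hx : x ≠ 0) (he : (trM v).mulVec x = r • x)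
    (p q : C4) (hpd : p = pt (v 0 0) (v 0 1) ((upM v 2).mulVec x))
    (hqd : q = pt (v 1 0) (v 1 1) ((loM v 2).mulVec x)) (s : ℂ)
    (hs : s = r / ((loM v 2).det * (upM v 3).det)) :
    p + q ∈ Submodule.span ℂ {v 2 0, v 2 1} ∧ p + s • q ∈ Submodule.span ℂ {v 3 0, v 3 1} ∧
      s ≠ 0 ∧ s ≠ 1 := by
  have m2 : p + q ∈ Submodule.span ℂ {v 2 0, v 2 1} := by
    rw [hpd, hqd, pt_upM_loM]
    exact Submodule.smul_mem _ _ (pt_mem _ _ _)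
  have m0 : p ∈ Submodule.span ℂ {v 0 0, v 0 1} := hpd ▸ pt_mem _ _ _
  have m1 : q ∈ Submodule.span ℂ {v 1 0, v 1 1} := hqd ▸ pt_mem _ _ _
  have hp0 : p ≠ 0 := by
    intro h0
    rw [hpd, pt] at h0
    have := pair_indep v 0 1 (hp 0 1 (by decide)) ((upM v 2).mulVec x 0) ((upM v 2).mulVec x 1)
      0 0 (by rw [zero_smul, zero_smul, add_zero, add_zero]; exact h0)
    apply mulVec_ne_zero_of_det _ hu2 x hx
    ext k
    fin_cases k
    · exact this.1
    · exact this.2.1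
  have m3 : p + s • q ∈ Submodule.span ℂ {v 3 0, v 3 1} := by
    have h3 := pt_upM_loM v 3 ((upM v 3).adjugate.mulVec ((upM v 2).mulVec x))
    have e1 : (upM v 3).mulVec ((upM v 3).adjugate.mulVec ((upM v 2).mulVec x)) =
        (upM v 3).det • (upM v 2).mulVec x := by
      rw [Matrix.mulVec_mulVec, Matrix.mul_adjugate, Matrix.smul_mulVec, Matrix.one_mulVec]
    have e2 : (loM v 3).mulVec ((upM v 3).adjugate.mulVec ((upM v 2).mulVec x)) =
        (r / (loM v 2).det) • (loM v 2).mulVec x := by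
      have e3 : (loM v 2).mulVec ((trM v).mulVec x) = (loM v 2).det •
          (loM v 3).mulVec ((upM v 3).adjugate.mulVec ((upM v 2).mulVec x)) := by
        rw [trM, Matrix.mulVec_mulVec, ← Matrix.mul_assoc, ← Matrix.mul_assoc, ← Matrix.mul_assoc,
          Matrix.mul_adjugate, Matrix.smul_mul, Matrix.one_mul, Matrix.smul_mul, Matrix.smul_mul,
          Matrix.smul_mulVec, Matrix.mulVec_mulVec, Matrix.mulVec_mulVec, Matrix.mul_assoc]
      rw [he, Matrix.mulVec_smul] at e3
      rw [div_eq_inv_mul, mul_smul, e3, smul_smul, inv_mul_cancel₀ hl2, one_smul]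
    rw [e1, e2, pt_smul, pt_smul, ← hpd, ← hqd] at h3
    have e4 : p + s • q = (upM v 3).det⁻¹ • ((upM v 3).det • p + (r / (loM v 2).det) • q) := by
      rw [smul_add, smul_smul, smul_smul, inv_mul_cancel₀ hu3, one_smul, hs]
      congr 2
      field_simp
    rw [e4, h3]
    exact Submodule.smul_mem _ _ (Submodule.smul_mem _ _ (pt_mem _ _ _))
  refine ⟨m2, m3, ?_, ?_⟩
  · rintro h0
    rw [h0, zero_smul, add_zero] at m3
    have h1 := pair_disjoint v 0 3 (hp 0 3 (by decide))
    have : p ∈ (⊥ : Submodule ℂ C4) := h1 ▸ ⟨m0, m3⟩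
    exact hp0 (by simpa using this)
  · rintro h0
    rw [h0, one_smul] at m3
    have h1 := pair_disjoint v 2 3 (hp 2 3 (by decide))
    have : p + q ∈ (⊥ : Submodule ℂ C4) := h1 ▸ ⟨m2, m3⟩
    have hpq : p + q = 0 := by simpa using this
    have hq1 : p = -q := eq_neg_of_add_eq_zero_left hpq
    have h2 := pair_disjoint v 0 1 (hp 0 1 (by decide))
    have : p ∈ (⊥ : Submodule ℂ C4) := h2 ▸ ⟨m0, hq1 ▸ Submodule.neg_mem _ m1⟩
    exact hp0 (by simpa using this)

lemma frame_det (v : Fin 4 → Fin 2 → C4) (hp : (pairMat v 0 1).det ≠ 0)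
    (U W : Matrix (Fin 2) (Fin 2) ℂ) (hU : U.det ≠ 0) (hW : W.det ≠ 0) (x x' : Fin 2 → ℂ)
    (hxx : x 0 * x' 1 - x 1 * x' 0 ≠ 0) :
    (Matrix.of ![pt (v 0 0) (v 0 1) (U.mulVec x), pt (v 1 0) (v 1 1) (W.mulVec x),
      pt (v 0 0) (v 0 1) (U.mulVec x'), pt (v 1 0) (v 1 1) (W.mulVec x')]).transpose.det ≠ 0 := by
  rw [Matrix.det_transpose]
  have e : Matrix.of ![pt (v 0 0) (v 0 1) (U.mulVec x), pt (v 1 0) (v 1 1) (W.mulVec x),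
      pt (v 0 0) (v 0 1) (U.mulVec x'), pt (v 1 0) (v 1 1) (W.mulVec x')] =
      !![U.mulVec x 0, U.mulVec x 1, 0, 0; 0, 0, W.mulVec x 0, W.mulVec x 1;
        U.mulVec x' 0, U.mulVec x' 1, 0, 0; 0, 0, W.mulVec x' 0, W.mulVec x' 1] *
        pairMat v 0 1 := by
    ext i j
    fin_cases i <;> simp [Matrix.mul_apply, Fin.sum_univ_four, pairMat, pt]
  rw [e, Matrix.det_mul]
  refine mul_ne_zero ?_ hp
  have e2 : (!![U.mulVec x 0, U.mulVec x 1, 0, 0; 0, 0, W.mulVec x 0, W.mulVec x 1;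
        U.mulVec x' 0, U.mulVec x' 1, 0, 0; 0, 0, W.mulVec x' 0, W.mulVec x' 1]).det =
      -(U.det * W.det * (x 0 * x' 1 - x 1 * x' 0) ^ 2) := by
    rw [Matrix.det_fin_two, Matrix.det_fin_two]
    simp [Matrix.det_succ_row_zero, Fin.sum_univ_succ, Matrix.mulVec, dotProduct, Fin.succAbove]
    ring
  rw [e2]
  exact neg_ne_zero.mpr (mul_ne_zero (mul_ne_zero hU hW) (pow_ne_zero _ hxx))

lemma finrank_of_genP (v : Fin 4 → Fin 2 → C4) (hp : ∀ i j, i ≠ j → (pairMat v i j).det ≠ 0)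
    (hu2 : (upM v 2).det ≠ 0) (hu3 : (upM v 3).det ≠ 0) (hl2 : (loM v 2).det ≠ 0)
    (hd : (trM v).trace ^ 2 - 4 * (trM v).det ≠ 0) :
    Module.finrank ℂ (linSys 10 (fun i => Submodule.span ℂ {v i 0, v i 1}) ![3, 3, 3, 3]) = 56 := by
  obtain ⟨r, r', x, x', hrr, hx, hx', hxx⟩ := exists_eigen _ hd
  have hx0 : x ≠ 0 := by
    rintro rfl
    simp at hxx
  have hx0' : x' ≠ 0 := by
    rintro rfl
    simp at hxx
  obtain ⟨a2, a3, hs0, hs1⟩ := transversal v hp hu2 hu3 hl2 r x hx0 hx _ _ rfl rfl _ rfl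
  obtain ⟨b2, b3, ht0, ht1⟩ := transversal v hp hu2 hu3 hl2 r' x' hx0' hx' _ _ rfl rfl _ rfl
  have a0 := pt_mem (v 0 0) (v 0 1) ((upM v 2).mulVec x)
  have a1 := pt_mem (v 1 0) (v 1 1) ((loM v 2).mulVec x)
  have b0 := pt_mem (v 0 0) (v 0 1) ((upM v 2).mulVec x')
  have b1 := pt_mem (v 1 0) (v 1 1) ((loM v 2).mulVec x')
  have hdet := frame_det v (hp 0 1 (by decide)) (upM v 2) (loM v 2) hu2 hl2 x x' hxx
  have hst : r / ((loM v 2).det * (upM v 3).det) ≠ r' / ((loM v 2).det * (upM v 3).det) := by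
    intro h
    exact hrr ((div_left_inj' (mul_ne_zero hl2 hu3)).mp h)
  generalize r / ((loM v 2).det * (upM v 3).det) = s at *
  generalize r' / ((loM v 2).det * (upM v 3).det) = t at *
  generalize pt (v 0 0) (v 0 1) ((upM v 2).mulVec x) = p at *
  generalize pt (v 1 0) (v 1 1) ((loM v 2).mulVec x) = q at *
  generalize pt (v 0 0) (v 0 1) ((upM v 2).mulVec x') = p' at *
  generalize pt (v 1 0) (v 1 1) ((loM v 2).mulVec x') = q' at *
  have c1 : ∀ A B : Matrix (Fin 2) (Fin 2) ℂ,
      ((Matrix.of ![p, q, p', q']).transpose * blk A B).mulVec ![1, 0, 0, 0] =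
        A 0 0 • p + A 1 0 • q := by
    intro A B
    ext l
    simp [Matrix.mulVec, dotProduct, Matrix.mul_apply, Fin.sum_univ_four, blk, mul_comm]
  have c2 : ∀ A B : Matrix (Fin 2) (Fin 2) ℂ,
      ((Matrix.of ![p, q, p', q']).transpose * blk A B).mulVec ![0, 0, 1, 0] =
        B 0 0 • p' + B 1 0 • q' := by
    intro A B
    ext l
    simp [Matrix.mulVec, dotProduct, Matrix.mul_apply, Fin.sum_univ_four, blk, mul_comm]
  refine finrank_linSys _ hdet s t hs0 hs1 ht0 ht1 hst v ?_ ?_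
  · intro i
    rw [c1]
    fin_cases i
    · simpa [frm] using a0
    · simpa [frm] using a1
    · simpa [frm] using a2
    · simpa [frm] using a3
  · intro i
    rw [c2]
    fin_cases i
    · simpa [frm] using b0
    · simpa [frm] using b1
    · simpa [frm] using b2
    · simpa [frm] using b3

/-- For four general lines in `P^3`, the system `𝓛_{10}(3,3,3,3)` of degree-10
forms with multiplicity 3 along each line has dimension exactly 56, although the
virtual dimension is `binom(13,3) - 4·58 = 286 - 232 = 54`; hence the system is
special. -/
theorem stmt_18 :
    GeneralLines 4 (fun L =>
      Module.finrank ℂ ↥(linSys 10 L ![3, 3, 3, 3]) = 56) ∧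
    Nat.choose 13 3 - 4 * 58 = 54 := by
  refine ⟨⟨genP (fun i k l => X (i, k, l)), genP_X_ne_zero, fun v hv => ?_⟩, by decide⟩
  rw [map_genP] at hv
  simp only [eval_X] at hv
  have hv' : genP v ≠ 0 := hv
  rw [genP] at hv'
  obtain ⟨h12, hd⟩ := mul_ne_zero_iff.mp hv'
  obtain ⟨h1, h2⟩ := mul_ne_zero_iff.mp h12
  obtain ⟨h3, hl2⟩ := mul_ne_zero_iff.mp h2
  obtain ⟨hu2, hu3⟩ := mul_ne_zero_iff.mp h3
  have hp : ∀ i j, i ≠ j → (pairMat v i j).det ≠ 0 := by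
    intro i j hij
    have h4 := Finset.prod_ne_zero_iff.mp (Finset.prod_ne_zero_iff.mp h1 i (Finset.mem_univ _)) j
      (Finset.mem_univ _)
    rwa [if_neg hij] at h4
  refine ⟨fun i => ?_, fun i j hij => pair_disjoint v i j (hp i j hij),
    finrank_of_genP v hp hu2 hu3 hl2 hd⟩
  exact pair_linearIndependent v i (i + 1) (hp _ _ (by revert i; decide))
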